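/- Let w_max and w_min be, respectively, the largest and the smallest width of Ω over all directions. Then for every u ∈ 𝒰_Ω and all unit vectors h₁, h₂ ∈ ℝ² one has ‖u_{h₁}‖₁ ≤ 2 (w_max / w_min) ‖u_{h₂}‖₁. -/

import Mathlib

open Set MeasureTheory
open scoped ENNReal

/-- Partial derivative of `u` in the `x` direction (junk value where `u` is not
differentiable). -/
noncomputable def ux (u : ℝ × ℝ → ℝ) (z : ℝ × ℝ) : ℝ := fderiv ℝ u z (1, 0)

/-- Partial derivative of `u` in the `y` direction. -/
noncomputable def uy (u : ℝ × ℝ → ℝ) (z : ℝ × ℝ) : ℝ := fderiv ℝ u z (0, 1)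

/-- Directional derivative of `u` in the direction `h`. -/
noncomputable def uh (h : ℝ × ℝ) (u : ℝ × ℝ → ℝ) (z : ℝ × ℝ) : ℝ := fderiv ℝ u z h

/-- The class `𝒰_Ω`: continuous concave functions on `Ω` vanishing on the boundary,
with uniformly bounded gradient over all interior points where it exists. -/
def MemU (Ω : Set (ℝ × ℝ)) (u : ℝ × ℝ → ℝ) : Prop :=
  ContinuousOn u Ω ∧ ConcaveOn ℝ Ω u ∧ (∀ z ∈ frontier Ω, u z = 0) ∧
    ∃ C : ℝ, ∀ z ∈ interior Ω, ∀ g : (ℝ × ℝ) →L[ℝ] ℝ, HasFDerivAt u g z → ‖g‖ ≤ C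

/-- The `L¹` norm of `f` over `Ω`. -/
noncomputable def L1N (Ω : Set (ℝ × ℝ)) (f : ℝ × ℝ → ℝ) : ℝ := ∫ z in Ω, |f z|

/-- The `L^p` norm of `f` over `Ω`, `p ∈ [1, ∞)`. -/
noncomputable def LpN (Ω : Set (ℝ × ℝ)) (p : ℝ) (f : ℝ × ℝ → ℝ) : ℝ :=
  (∫ z in Ω, |f z| ^ p) ^ (1 / p)

/-- The `L^∞` norm (essential supremum) of `f` over `Ω`. -/
noncomputable def LinfN (Ω : Set (ℝ × ℝ)) (f : ℝ × ℝ → ℝ) : ℝ≥0∞ :=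
  essSup (fun z => ENNReal.ofReal |f z|) (volume.restrict Ω)

/-- The width of `Ω` parallel to the (Euclidean unit) vector `h`: the distance between the
two lines of support of `Ω` parallel to `h`, i.e. the oscillation over `Ω` of the linear
functional given by the unit normal `(-h.2, h.1)` to `h`. -/
noncomputable def widthPar (Ω : Set (ℝ × ℝ)) (h : ℝ × ℝ) : ℝ :=
  sSup ((fun z : ℝ × ℝ => -h.2 * z.1 + h.1 * z.2) '' Ω) -
    sInf ((fun z : ℝ × ℝ => -h.2 * z.1 + h.1 * z.2) '' Ω)

/-- The total variation of a convex function on `[a, b]` vanishing at both ends is twice its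
depth. -/
lemma integral_abs_rightDeriv_eq_of_isMinOn {ψ : ℝ → ℝ} {a b c : ℝ}
    (hcont : ContinuousOn ψ (Icc a b)) (hconv : ConvexOn ℝ (Icc a b) ψ)
    (ha : ψ a = 0) (hb : ψ b = 0) (hc : c ∈ Icc a b) (hmin : IsMinOn ψ (Icc a b) c) :
    ∫ s in Ioo a b, |derivWithin ψ (Ioi s) s| = -2 * ψ c := by
  have hderiv : ∀ s ∈ Ioo a b, HasDerivWithinAt ψ (derivWithin ψ (Ioi s) s) (Ioi s) s :=
    fun s hs => hconv.hasDerivWithinAt_rightDeriv_of_mem_interior (by rwa [interior_Icc])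
  have hleft : ∀ s ∈ Ioo a c, 0 ≤ -derivWithin ψ (Ioi s) s := by
    intro s hs
    have hs' : s ∈ interior (Icc a b) := by
      rw [interior_Icc]; exact ⟨hs.1, hs.2.trans_le hc.2⟩
    have h1 := hconv.rightDeriv_le_slope_of_mem_interior hs' hc hs.2
    have h2 : slope ψ s c ≤ 0 := by
      rw [slope_def_field]
      exact div_nonpos_of_nonpos_of_nonneg (sub_nonpos.2 (hmin (interior_subset hs')))
        (sub_nonneg.2 hs.2.le)
    linarith
  have hright : ∀ s ∈ Ioo c b, 0 ≤ derivWithin ψ (Ioi s) s := by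
    intro s hs
    have hs' : s ∈ interior (Icc a b) := by
      rw [interior_Icc]; exact ⟨hc.1.trans_lt hs.1, hs.2⟩
    have h1 := hconv.slope_le_leftDeriv_of_mem_interior hc hs' hs.1
    have h2 := hconv.leftDeriv_le_rightDeriv_of_mem_interior hs'
    have h3 : 0 ≤ slope ψ c s := by
      rw [slope_def_field]
      exact div_nonneg (sub_nonneg.2 (hmin (interior_subset hs'))) (sub_nonneg.2 hs.1.le)
    linarith
  have hcl : ContinuousOn ψ (Icc a c) := hcont.mono (Icc_subset_Icc le_rfl hc.2)
  have hcr : ContinuousOn ψ (Icc c b) := hcont.mono (Icc_subset_Icc hc.1 le_rfl)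
  have hdl : ∀ s ∈ Ioo a c, HasDerivWithinAt (-ψ) (-derivWithin ψ (Ioi s) s) (Ioi s) s :=
    fun s hs => (hderiv s ⟨hs.1, hs.2.trans_le hc.2⟩).neg
  have hdr : ∀ s ∈ Ioo c b, HasDerivWithinAt ψ (derivWithin ψ (Ioi s) s) (Ioi s) s :=
    fun s hs => hderiv s ⟨hc.1.trans_lt hs.1, hs.2⟩
  have hil := intervalIntegral.integrableOn_deriv_right_of_nonneg hcl.neg hdl hleft
  have hir := intervalIntegral.integrableOn_deriv_right_of_nonneg hcr hdr hright
  have hil' := (intervalIntegrable_iff_integrableOn_Ioc_of_le hc.1).2 hil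
  have hir' := (intervalIntegrable_iff_integrableOn_Ioc_of_le hc.2).2 hir
  have hl := intervalIntegral.integral_eq_sub_of_hasDeriv_right_of_le hc.1 hcl.neg hdl hil'
  have hr := intervalIntegral.integral_eq_sub_of_hasDeriv_right_of_le hc.2 hcr hdr hir'
  have hlabs : ∫ s in a..c, |derivWithin ψ (Ioi s) s| =
      ∫ s in a..c, -derivWithin ψ (Ioi s) s := by
    rw [intervalIntegral.integral_of_le hc.1, intervalIntegral.integral_of_le hc.1,
      integral_Ioc_eq_integral_Ioo, integral_Ioc_eq_integral_Ioo]
    exact setIntegral_congr_fun measurableSet_Ioo fun s hs =>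
      abs_of_nonpos (neg_nonneg.1 (hleft s hs))
  have hrabs : ∫ s in c..b, |derivWithin ψ (Ioi s) s| =
      ∫ s in c..b, derivWithin ψ (Ioi s) s := by
    rw [intervalIntegral.integral_of_le hc.2, intervalIntegral.integral_of_le hc.2,
      integral_Ioc_eq_integral_Ioo, integral_Ioc_eq_integral_Ioo]
    exact setIntegral_congr_fun measurableSet_Ioo fun s hs => abs_of_nonneg (hright s hs)
  rw [← integral_Ioc_eq_integral_Ioo, ← intervalIntegral.integral_of_le (hc.1.trans hc.2),
    ← intervalIntegral.integral_add_adjacent_intervals (b := c) ?_ hir'.abs, hlabs, hrabs, hl, hr]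
  · simp only [Pi.neg_apply, ha, hb]; ring
  · simpa using hil'.abs

/-- A concave function is differentiable almost everywhere in the interior of its domain. -/
lemma ConcaveOn.ae_differentiableAt {E : Type*} [NormedAddCommGroup E] [NormedSpace ℝ E]
    [FiniteDimensional ℝ E] [MeasurableSpace E] [BorelSpace E] {μ : Measure E} [μ.IsAddHaarMeasure]
    {C : Set E} {f : E → ℝ} (hf : ConcaveOn ℝ C f) :
    ∀ᵐ z ∂μ, z ∈ interior C → DifferentiableAt ℝ f z := by
  rw [ae_iff]
  refine measure_null_of_locally_null _ fun z hz => ?_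
  simp only [mem_ofPred_eq, Classical.not_imp] at hz
  obtain ⟨K, t, ht, hK⟩ := hf.locallyLipschitzOn_interior hz.1
  rw [isOpen_interior.nhdsWithin_eq hz.1] at ht
  obtain ⟨v, hvt, hvo, hzv⟩ := mem_nhds_iff.1 ht
  refine ⟨v ∩ {z | ¬(z ∈ interior C → DifferentiableAt ℝ f z)},
    Filter.inter_mem (mem_nhdsWithin_of_mem_nhds (hvo.mem_nhds hzv)) self_mem_nhdsWithin, ?_⟩
  refine measure_mono_null ?_ (ae_iff.1 ((hK.mono hvt).ae_differentiableWithinAt_of_mem (μ := μ)))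
  rintro y ⟨hyv, hy⟩ hcon
  simp only [mem_ofPred_eq, Classical.not_imp] at hy
  exact hy.2 ((hcon hyv).differentiableAt (hvo.mem_nhds hyv))

/-- A nonempty horizontal section of the interior of a compact convex planar set is an open
interval whose endpoints are boundary points. -/
lemma exists_section_interior_eq_Ioo {Ω : Set (ℝ × ℝ)} (hc : IsCompact Ω) (hconv : Convex ℝ Ω)
    {s₀ t : ℝ} (h₀ : (s₀, t) ∈ interior Ω) :
    ∃ a b : ℝ, a < b ∧ {s : ℝ | (s, t) ∈ interior Ω} = Ioo a b ∧
      (a, t) ∈ frontier Ω ∧ (b, t) ∈ frontier Ω ∧ ∀ s ∈ Icc a b, (s, t) ∈ Ω := by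
  set S : Set ℝ := {s : ℝ | (s, t) ∈ interior Ω} with hS
  have hcts : Continuous fun s : ℝ => (s, t) := by fun_prop
  have hSo : IsOpen S := isOpen_interior.preimage hcts
  have hSconv : Convex ℝ S := by
    intro x hx y hy α β hα hβ hαβ
    have := hconv.interior hx hy hα hβ hαβ
    simpa [hS, ← add_mul, hαβ] using this
  have hSsub : S ⊆ Prod.fst '' Ω := fun s hs => ⟨(s, t), interior_subset hs, rfl⟩
  have hbd := (hc.image continuous_fst).isBounded.subset hSsub
  have hbelow : BddBelow S := hbd.bddBelow
  have habove : BddAbove S := hbd.bddAbove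
  have hne : S.Nonempty := ⟨s₀, h₀⟩
  have hconn : IsConnected S := ⟨hne, hSconv.isPreconnected⟩
  have hcl : ∀ s ∈ closure S, (s, t) ∈ Ω := by
    have hcl' : IsClosed {s : ℝ | (s, t) ∈ Ω} := hc.isClosed.preimage hcts
    have hsub : S ⊆ {s : ℝ | (s, t) ∈ Ω} := fun s hs => interior_subset (s := Ω) hs
    exact fun s hs => closure_minimal hsub hcl' hs
  have ha : sInf S ∉ S := fun h => by
    obtain ⟨l, r, hlr, hsub⟩ := mem_nhds_iff_exists_Ioo_subset.1 (hSo.mem_nhds h)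
    obtain ⟨y, hly, hy⟩ := exists_between hlr.1
    exact absurd (csInf_le hbelow (hsub ⟨hly, hy.trans hlr.2⟩)) (not_le.2 hy)
  have hb : sSup S ∉ S := fun h => by
    obtain ⟨l, r, hlr, hsub⟩ := mem_nhds_iff_exists_Ioo_subset.1 (hSo.mem_nhds h)
    obtain ⟨y, hy, hyr⟩ := exists_between hlr.2
    exact absurd (le_csSup habove (hsub ⟨hlr.1.trans hy, hyr⟩)) (not_le.2 hy)
  have hIoo : S = Ioo (sInf S) (sSup S) := by
    refine Subset.antisymm (fun s hs => ⟨?_, ?_⟩) (hconn.Ioo_csInf_csSup_subset hbelow habove)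
    · exact (csInf_le hbelow hs).lt_of_ne fun h => ha (h ▸ hs)
    · exact (le_csSup habove hs).lt_of_ne fun h => hb (h ▸ hs)
  have hab : sInf S < sSup S := by
    have h : s₀ ∈ Ioo (sInf S) (sSup S) := hIoo.subset h₀
    exact h.1.trans h.2
  refine ⟨sInf S, sSup S, hab, hIoo, ?_, ?_, fun s hs => hcl s ?_⟩
  · exact ⟨subset_closure (hcl _ (csInf_mem_closure hne hbelow)), ha⟩
  · exact ⟨subset_closure (hcl _ (csSup_mem_closure hne habove)), hb⟩
  · rw [hIoo, closure_Ioo hab.ne]; exact hs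

lemma ConcaveOn.comp_section {Ω : Set (ℝ × ℝ)} {u : ℝ × ℝ → ℝ} (hu : ConcaveOn ℝ Ω u)
    {a b t : ℝ} (hΩ : ∀ s ∈ Icc a b, (s, t) ∈ Ω) :
    ConcaveOn ℝ (Icc a b) fun s => u (s, t) := by
  refine ⟨convex_Icc a b, fun x hx y hy α β hα hβ hαβ => ?_⟩
  have := hu.2 (hΩ x hx) (hΩ y hy) hα hβ hαβ
  simpa [← add_mul, hαβ] using this

/-- A concave function vanishing on the boundary is nonnegative. -/
lemma ConcaveOn.nonneg_of_frontier {Ω : Set (ℝ × ℝ)} {u : ℝ × ℝ → ℝ} (hc : IsCompact Ω)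
    (hu : ConcaveOn ℝ Ω u) (h0 : ∀ z ∈ frontier Ω, u z = 0) {z : ℝ × ℝ} (hz : z ∈ Ω) :
    0 ≤ u z := by
  by_cases hzi : z ∈ interior Ω
  · obtain ⟨a, b, hab, hS, ha, hb, hI⟩ :=
      exists_section_interior_eq_Ioo hc hu.1 (s₀ := z.1) (t := z.2) hzi
    have hz1 : z.1 ∈ Ioo a b := hS ▸ hzi
    have := (hu.comp_section hI).min_le_of_mem_Icc (left_mem_Icc.2 hab.le)
      (right_mem_Icc.2 hab.le) (Ioo_subset_Icc_self hz1)
    simpa [h0 _ ha, h0 _ hb] using this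
  · exact (h0 z ⟨subset_closure hz, hzi⟩).ge

/-- If `u` is differentiable at almost every point of a nonempty section, the variation of `u`
along that section is twice its maximum over the section. -/
lemma exists_integral_section_eq {Ω : Set (ℝ × ℝ)} {u : ℝ × ℝ → ℝ} (hc : IsCompact Ω)
    (hcont : ContinuousOn u Ω) (hu : ConcaveOn ℝ Ω u) (h0 : ∀ z ∈ frontier Ω, u z = 0)
    {s₀ t : ℝ} (h₀ : (s₀, t) ∈ interior Ω)
    (hdiff : ∀ᵐ s : ℝ, (s, t) ∈ interior Ω → DifferentiableAt ℝ u (s, t)) :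
    ∃ c : ℝ, (c, t) ∈ Ω ∧ (∀ s, (s, t) ∈ interior Ω → u (s, t) ≤ u (c, t)) ∧
      ∫ s, (interior Ω).indicator (fun z => |uh (1, 0) u z|) (s, t) = 2 * u (c, t) := by
  obtain ⟨a, b, hab, hS, ha, hb, hI⟩ := exists_section_interior_eq_Ioo hc hu.1 h₀
  have hmem : ∀ s, (s, t) ∈ interior Ω ↔ s ∈ Ioo a b := fun s => by rw [← hS]; rfl
  have hcts : ContinuousOn (fun s => u (s, t)) (Icc a b) :=
    hcont.comp (by fun_prop) hI
  obtain ⟨c, hcI, hcmax⟩ := isCompact_Icc.exists_isMaxOn (nonempty_Icc.2 hab.le) hcts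
  refine ⟨c, hI c hcI, fun s hs => hcmax (Ioo_subset_Icc_self ((hmem s).1 hs)), ?_⟩
  have key := integral_abs_rightDeriv_eq_of_isMinOn (ψ := -fun s => u (s, t)) hcts.neg
    (hu.comp_section hI).neg (by simp [h0 _ ha]) (by simp [h0 _ hb]) hcI hcmax.neg
  have hind : (fun s => (interior Ω).indicator (fun z => |uh (1, 0) u z|) (s, t)) =
      (Ioo a b).indicator fun s => |uh (1, 0) u (s, t)| := by
    ext s
    by_cases hs : s ∈ Ioo a b
    · rw [indicator_of_mem hs, indicator_of_mem ((hmem s).2 hs)]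
    · rw [indicator_of_notMem hs, indicator_of_notMem (mt (hmem s).1 hs)]
  rw [hind, integral_indicator measurableSet_Ioo]
  trans ∫ s in Ioo a b, |derivWithin (-fun s => u (s, t)) (Ioi s) s|
  · refine setIntegral_congr_ae measurableSet_Ioo ?_
    filter_upwards [hdiff] with s hs hsI
    have hd := (hs ((hmem s).2 hsI)).hasFDerivAt.comp_hasDerivAt s
      ((hasDerivAt_id s).prodMk (hasDerivAt_const s t))
    have hd' := hd.neg.hasDerivWithinAt (s := Ioi s)
    have := hd'.derivWithin (uniqueDiffWithinAt_Ioi s)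
    rw [show (-fun s => u (s, t)) = -(u ∘ fun x => (id x, t)) from rfl, this, abs_neg]
    rfl
  · rw [key]; simp

lemma trapezoid_le_intervalIntegral {G : ℝ → ℝ} {A B l r : ℝ} (hlr : l ≤ r) (hG : Integrable G)
    (h : ∀ᵐ t : ℝ, t ∈ Icc l r → A * (r - t) + B * (t - l) ≤ (r - l) * G t) :
    (A + B) / 2 * (r - l) ≤ ∫ t in l..r, G t := by
  rcases hlr.eq_or_lt with rfl | hlt
  · simp
  have hcts : Continuous fun t : ℝ => A * (r - t) + B * (t - l) := by fun_prop
  have hmono := intervalIntegral.integral_mono_ae_restrict hlr (hcts.intervalIntegrable l r)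
    (hG.intervalIntegrable.const_mul (r - l)) ((ae_restrict_iff' measurableSet_Icc).2 h)
  have hval : ∫ t in l..r, (A * (r - t) + B * (t - l)) = (r - l) * ((A + B) / 2 * (r - l)) := by
    have hderiv : ∀ t ∈ uIcc l r, HasDerivAt
        (fun t => -A * (r - t) ^ 2 / 2 + B * (t - l) ^ 2 / 2) (A * (r - t) + B * (t - l)) t := by
      intro t _
      have h1 := (((hasDerivAt_id t).const_sub r).pow 2).const_mul (-A / 2)
      have h2 := (((hasDerivAt_id t).sub_const l).pow 2).const_mul (B / 2)
      exact ((h1.add h2).congr_of_eventuallyEq (.of_forall fun x => by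
        simp only [Pi.add_apply, Pi.pow_apply, id]; ring)).congr_deriv (by simp; ring)
    rw [intervalIntegral.integral_eq_sub_of_hasDerivAt hderiv (hcts.intervalIntegrable l r)]
    ring
  rw [hval, intervalIntegral.integral_const_mul] at hmono
  exact le_of_mul_le_mul_left hmono (sub_pos.2 hlt)

lemma MemU.integrable_indicator {Ω : Set (ℝ × ℝ)} {u : ℝ × ℝ → ℝ} (hc : IsCompact Ω)
    (hu : MemU Ω u) (h : ℝ × ℝ) :
    Integrable ((interior Ω).indicator fun z => |uh h u z|) := by
  obtain ⟨C, hC⟩ := hu.2.2.2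
  rw [integrable_indicator_iff isOpen_interior.measurableSet]
  have hmeas : Measurable fun z => |uh h u z| := (measurable_fderiv_apply_const ℝ u h).abs
  refine Measure.integrableOn_of_bounded (M := max C 0 * ‖h‖)
    ((measure_mono interior_subset).trans_lt hc.measure_lt_top).ne
    hmeas.aestronglyMeasurable ?_
  filter_upwards [ae_restrict_mem isOpen_interior.measurableSet] with z hz
  rw [Real.norm_eq_abs, abs_abs, ← Real.norm_eq_abs]
  refine ((fderiv ℝ u z).le_opNorm h).trans ?_
  gcongr
  by_cases hd : DifferentiableAt ℝ u z
  · exact (hC z hz _ hd.hasFDerivAt).trans (le_max_left _ _)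
  · simp [fderiv_zero_of_not_differentiableAt hd]

/-- Two-sided bound for the `L¹` norm of the horizontal derivative in terms of the maximum of `u`
and the extent of `Ω` in the vertical direction. -/
lemma MemU.L1N_horizontal_bounds {Ω : Set (ℝ × ℝ)} {u : ℝ × ℝ → ℝ} (hc : IsCompact Ω)
    (hconv : Convex ℝ Ω) (hu : MemU Ω u) {z₀ : ℝ × ℝ} (hz₀ : z₀ ∈ Ω) (hmax : IsMaxOn u Ω z₀) :
    u z₀ * (sSup (Prod.snd '' Ω) - sInf (Prod.snd '' Ω)) ≤ L1N Ω (uh (1, 0) u) ∧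
      L1N Ω (uh (1, 0) u) ≤ 2 * u z₀ * (sSup (Prod.snd '' Ω) - sInf (Prod.snd '' Ω)) := by
  have hint := hu.integrable_indicator hc (1, 0)
  obtain ⟨hcont, hconc, h0, -⟩ := hu
  have hnn : ∀ z ∈ Ω, 0 ≤ u z := fun z hz => hconc.nonneg_of_frontier hc h0 hz
  set F : ℝ × ℝ → ℝ := (interior Ω).indicator fun z => |uh (1, 0) u z| with hF
  have hF0 : ∀ z, 0 ≤ F z := fun z => indicator_nonneg (fun _ _ => abs_nonneg _) z
  have hae : (interior Ω : Set (ℝ × ℝ)) =ᵐ[volume] Ω :=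
    interior_ae_eq_of_null_frontier (hconv.addHaar_frontier volume)
  set G : ℝ → ℝ := fun t => ∫ s, F (s, t) with hG
  have hL : L1N Ω (uh (1, 0) u) = ∫ t, G t := by
    rw [L1N, ← setIntegral_congr_set hae, ← integral_indicator isOpen_interior.measurableSet]
    exact integral_prod_symm F hint
  have hGint : Integrable G := hint.integral_prod_right
  have hG0 : ∀ t, 0 ≤ G t := fun t => integral_nonneg fun s => hF0 _
  have hTc : IsCompact (Prod.snd '' Ω) := hc.image continuous_snd
  have hTne : (Prod.snd '' Ω).Nonempty := ⟨_, z₀, hz₀, rfl⟩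
  obtain ⟨p, hp, hpt⟩ := hTc.sInf_mem hTne
  obtain ⟨q, hq, hqt⟩ := hTc.sSup_mem hTne
  have hTle : ∀ z ∈ Ω, sInf (Prod.snd '' Ω) ≤ z.2 ∧ z.2 ≤ sSup (Prod.snd '' Ω) := fun z hz =>
    ⟨csInf_le hTc.bddBelow ⟨z, hz, rfl⟩, le_csSup hTc.bddAbove ⟨z, hz, rfl⟩⟩
  set l := sInf (Prod.snd '' Ω)
  set r := sSup (Prod.snd '' Ω)
  have hdiff : ∀ᵐ t : ℝ, ∀ᵐ s : ℝ, (s, t) ∈ interior Ω → DifferentiableAt ℝ u (s, t) := by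
    have h := hconc.ae_differentiableAt (μ := volume)
    have h' := (Measure.measurePreserving_swap (μ := (volume : Measure ℝ))
      (ν := (volume : Measure ℝ))).quasiMeasurePreserving.ae h
    exact Measure.ae_ae_of_ae_prod h'
  have hlow : ∀ᵐ t : ℝ, ∀ z ∈ Ω, z.2 = t → 2 * u z ≤ G t := by
    filter_upwards [hdiff] with t ht z hz hzt
    subst hzt
    by_cases hzi : z ∈ interior Ω
    · obtain ⟨c, -, hcm, hcG⟩ := exists_integral_section_eq hc hcont hconc h0 (s₀ := z.1) hzi ht
      have := hcm z.1 hzi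
      change G z.2 = _ at hcG
      rw [hcG]
      simpa using this
    · rw [h0 z ⟨subset_closure hz, hzi⟩]
      simpa using hG0 z.2
  have hup : ∀ᵐ t : ℝ, G t ≤ (Icc l r).indicator (fun _ => 2 * u z₀) t := by
    filter_upwards [hdiff] with t ht
    by_cases hS : ∃ s, (s, t) ∈ interior Ω
    · obtain ⟨s, hs⟩ := hS
      obtain ⟨c, hcΩ, -, hcG⟩ := exists_integral_section_eq hc hcont hconc h0 hs ht
      change G t = _ at hcG
      rw [hcG, indicator_of_mem (show t ∈ Icc l r from hTle _ hcΩ)]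
      exact mul_le_mul_of_nonneg_left (hmax hcΩ) zero_le_two
    · push Not at hS
      have : G t = 0 := by
        simp only [hG, hF]
        simp [indicator_of_notMem (hS _)]
      rw [this]
      exact indicator_nonneg (fun _ _ => mul_nonneg zero_le_two (hnn z₀ hz₀)) t
  have htrap : ∀ z ∈ Ω, ∀ w ∈ Ω, z.2 ≤ w.2 → (u z + u w) * (w.2 - z.2) ≤ ∫ t in z.2..w.2, G t := by
    intro z hz w hw hzw
    have := trapezoid_le_intervalIntegral (A := 2 * u z) (B := 2 * u w) hzw hGint ?_
    · convert this using 2; ring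
    filter_upwards [hlow] with t ht htI
    rcases hzw.eq_or_lt with heq | hlt
    · have : t = z.2 := le_antisymm (heq ▸ htI.2) htI.1
      simp [this, ← heq]
    have hd : 0 < w.2 - z.2 := sub_pos.2 hlt
    have hα : 0 ≤ (w.2 - t) / (w.2 - z.2) := div_nonneg (sub_nonneg.2 htI.2) hd.le
    have hβ : 0 ≤ (t - z.2) / (w.2 - z.2) := div_nonneg (sub_nonneg.2 htI.1) hd.le
    have hαβ : (w.2 - t) / (w.2 - z.2) + (t - z.2) / (w.2 - z.2) = 1 := by
      field_simp; ring
    have h1 := ht _ (hconv hz hw hα hβ hαβ) (by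
      simp only [Prod.snd_add, Prod.smul_snd, smul_eq_mul]; field_simp; ring)
    have h2 := hconc.2 hz hw hα hβ hαβ
    simp only [smul_eq_mul] at h2
    calc 2 * u z * (w.2 - t) + 2 * u w * (t - z.2)
        = (w.2 - z.2) * (2 * ((w.2 - t) / (w.2 - z.2) * u z + (t - z.2) / (w.2 - z.2) * u w)) := by
          field_simp
      _ ≤ (w.2 - z.2) * G t := by
          refine mul_le_mul_of_nonneg_left (le_trans ?_ h1) hd.le
          linarith
  constructor
  · have h1 := htrap p hp z₀ hz₀ (hpt ▸ (hTle z₀ hz₀).1)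
    have h2 := htrap z₀ hz₀ q hq (hqt ▸ (hTle z₀ hz₀).2)
    rw [hpt] at h1
    rw [hqt] at h2
    have hlz := (hTle z₀ hz₀).1
    have hzr := (hTle z₀ hz₀).2
    have h3 : ∫ t in l..r, G t ≤ ∫ t, G t := by
      rw [intervalIntegral.integral_of_le (hlz.trans hzr)]
      exact setIntegral_le_integral hGint (.of_forall hG0)
    rw [← intervalIntegral.integral_add_adjacent_intervals (b := z₀.2) hGint.intervalIntegrable
      hGint.intervalIntegrable] at h3
    rw [hL]
    nlinarith [mul_nonneg (hnn p hp) (sub_nonneg.2 hlz), mul_nonneg (hnn q hq) (sub_nonneg.2 hzr)]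
  · rw [hL]
    have hlr : l ≤ r := (hTle z₀ hz₀).1.trans (hTle z₀ hz₀).2
    calc ∫ t, G t ≤ ∫ t, (Icc l r).indicator (fun _ => 2 * u z₀) t :=
          integral_mono_ae hGint
            ((integrable_indicator_iff measurableSet_Icc).2 (integrableOn_const (by simp))) hup
      _ = 2 * u z₀ * (r - l) := by
          rw [integral_indicator measurableSet_Icc]
          simp [hlr, mul_comm]

/-- The rotation of the plane taking `(1, 0)` to the unit vector `h`. -/
noncomputable def rotationTo (h : ℝ × ℝ) (hh : h.1 ^ 2 + h.2 ^ 2 = 1) : (ℝ × ℝ) ≃L[ℝ] (ℝ × ℝ) :=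
  LinearEquiv.toContinuousLinearEquiv
    { toFun := fun z => (h.1 * z.1 - h.2 * z.2, h.2 * z.1 + h.1 * z.2)
      invFun := fun z => (h.1 * z.1 + h.2 * z.2, -h.2 * z.1 + h.1 * z.2)
      map_add' := fun z w => by ext <;> simp <;> ring
      map_smul' := fun c z => by ext <;> simp <;> ring
      left_inv := fun z => by
        ext
        · linear_combination z.1 * hh
        · linear_combination z.2 * hh
      right_inv := fun z => by
        ext
        · linear_combination z.1 * hh
        · linear_combination z.2 * hh }

lemma rotationTo_apply (h : ℝ × ℝ) (hh : h.1 ^ 2 + h.2 ^ 2 = 1) (z : ℝ × ℝ) :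
    rotationTo h hh z = (h.1 * z.1 - h.2 * z.2, h.2 * z.1 + h.1 * z.2) := rfl

lemma rotationTo_one_zero (h : ℝ × ℝ) (hh : h.1 ^ 2 + h.2 ^ 2 = 1) :
    rotationTo h hh (1, 0) = h := by
  simp [rotationTo_apply]

lemma measurePreserving_rotationTo (h : ℝ × ℝ) (hh : h.1 ^ 2 + h.2 ^ 2 = 1) :
    MeasurePreserving (rotationTo h hh) := by
  refine ⟨(rotationTo h hh).continuous.measurable, ?_⟩
  have hdet : LinearMap.det ((rotationTo h hh).toLinearEquiv : (ℝ × ℝ) →ₗ[ℝ] ℝ × ℝ) = 1 := by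
    rw [← LinearMap.det_toMatrix (Module.Basis.finTwoProd ℝ), Matrix.det_fin_two]
    simp [LinearMap.toMatrix_apply, rotationTo_apply]
    linear_combination hh
  have := Measure.map_linearMap_addHaar_eq_smul_addHaar (volume : Measure (ℝ × ℝ))
    (f := ((rotationTo h hh).toLinearEquiv : (ℝ × ℝ) →ₗ[ℝ] ℝ × ℝ)) (by rw [hdet]; exact one_ne_zero)
  rw [hdet] at this
  simpa using this

lemma MemU.comp_rotationTo {Ω : Set (ℝ × ℝ)} {u : ℝ × ℝ → ℝ} (hu : MemU Ω u) (h : ℝ × ℝ)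
    (hh : h.1 ^ 2 + h.2 ^ 2 = 1) : MemU (rotationTo h hh ⁻¹' Ω) (u ∘ rotationTo h hh) := by
  obtain ⟨hcont, hconc, h0, C, hC⟩ := hu
  set R := rotationTo h hh
  refine ⟨hcont.comp R.continuous.continuousOn (mapsTo_preimage _ _),
    hconc.comp_linearMap (R.toLinearEquiv : (ℝ × ℝ) →ₗ[ℝ] ℝ × ℝ), fun z hz => ?_,
    max C 0 * ‖(R : (ℝ × ℝ) →L[ℝ] ℝ × ℝ)‖, fun z hz g hg => ?_⟩
  · exact h0 _ ((R.toHomeomorph.preimage_frontier Ω).symm.subset hz)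
  · have hz' : R z ∈ interior Ω := (R.toHomeomorph.preimage_interior Ω).symm.subset hz
    have hd : DifferentiableAt ℝ u (R z) :=
      R.comp_right_differentiableAt_iff.1 hg.differentiableAt
    have hg' : g = (fderiv ℝ u (R z)).comp (R : (ℝ × ℝ) →L[ℝ] ℝ × ℝ) :=
      hg.unique (hd.hasFDerivAt.comp z R.hasFDerivAt)
    rw [hg']
    refine (ContinuousLinearMap.opNorm_comp_le _ _).trans ?_
    gcongr
    exact (hC _ hz' _ hd.hasFDerivAt).trans (le_max_left _ _)

lemma widthPar_eq_rotationTo (Ω : Set (ℝ × ℝ)) (h : ℝ × ℝ) (hh : h.1 ^ 2 + h.2 ^ 2 = 1) :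
    widthPar Ω h = sSup (Prod.snd '' (rotationTo h hh ⁻¹' Ω)) -
      sInf (Prod.snd '' (rotationTo h hh ⁻¹' Ω)) := by
  have : (fun z : ℝ × ℝ => -h.2 * z.1 + h.1 * z.2) '' Ω =
      Prod.snd '' (rotationTo h hh ⁻¹' Ω) := by
    rw [← ContinuousLinearEquiv.image_symm_eq_preimage, image_image]
    rfl
  rw [widthPar, this]

lemma L1N_uh_eq_rotationTo (Ω : Set (ℝ × ℝ)) (u : ℝ × ℝ → ℝ) (h : ℝ × ℝ)
    (hh : h.1 ^ 2 + h.2 ^ 2 = 1) :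
    L1N Ω (uh h u) = L1N (rotationTo h hh ⁻¹' Ω) (uh (1, 0) (u ∘ rotationTo h hh)) := by
  rw [L1N, L1N, ← (measurePreserving_rotationTo h hh).setIntegral_preimage_emb
    (rotationTo h hh).toHomeomorph.measurableEmbedding]
  congr 1 with z
  rw [uh, uh, ContinuousLinearEquiv.comp_right_fderiv]
  simp [rotationTo_one_zero]

/-- The `L¹` norm of `u_h` lies between `max u` and `2 max u` times the width parallel to `h`. -/
lemma MemU.L1N_bounds {Ω : Set (ℝ × ℝ)} {u : ℝ × ℝ → ℝ} (hc : IsCompact Ω)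
    (hconv : Convex ℝ Ω) (hu : MemU Ω u) {z₀ : ℝ × ℝ} (hz₀ : z₀ ∈ Ω) (hmax : IsMaxOn u Ω z₀)
    {h : ℝ × ℝ} (hh : h.1 ^ 2 + h.2 ^ 2 = 1) :
    u z₀ * widthPar Ω h ≤ L1N Ω (uh h u) ∧ L1N Ω (uh h u) ≤ 2 * u z₀ * widthPar Ω h := by
  rw [widthPar_eq_rotationTo Ω h hh, L1N_uh_eq_rotationTo Ω u h hh]
  have hR : rotationTo h hh ((rotationTo h hh).symm z₀) = z₀ :=
    (rotationTo h hh).apply_symm_apply z₀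
  have := (hu.comp_rotationTo h hh).L1N_horizontal_bounds (z₀ := (rotationTo h hh).symm z₀)
    ((rotationTo h hh).toHomeomorph.isCompact_preimage.2 hc)
    (hconv.linear_preimage ((rotationTo h hh).toLinearEquiv : (ℝ × ℝ) →ₗ[ℝ] ℝ × ℝ))
    (hR.symm ▸ hz₀ : rotationTo h hh ((rotationTo h hh).symm z₀) ∈ Ω)
    (fun z hz => by simpa [hR] using hmax hz)
  simpa [hR] using this

/-- A compact planar set with nonempty interior has positive width in every direction. -/
lemma widthPar_pos {Ω : Set (ℝ × ℝ)} (hc : IsCompact Ω) (hne : (interior Ω).Nonempty)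
    {h : ℝ × ℝ} (hh : h.1 ^ 2 + h.2 ^ 2 = 1) : 0 < widthPar Ω h := by
  obtain ⟨z, hz⟩ := hne
  set f : ℝ × ℝ → ℝ := fun z => -h.2 * z.1 + h.1 * z.2 with hf
  have hcomp : IsCompact (f '' Ω) := hc.image (by fun_prop)
  have hev : ∀ᶠ ε in nhdsWithin (0 : ℝ) (Ioi 0), z + ε • (-h.2, h.1) ∈ interior Ω := by
    have hcts : Continuous fun ε : ℝ => z + ε • ((-h.2, h.1) : ℝ × ℝ) := by fun_prop
    exact nhdsWithin_le_nhds (hcts.continuousAt.preimage_mem_nhds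
      (isOpen_interior.mem_nhds (by simpa using hz)))
  obtain ⟨ε, hε, hε0⟩ := (hev.and self_mem_nhdsWithin).exists
  have h1 : f (z + ε • (-h.2, h.1)) ≤ sSup (f '' Ω) :=
    le_csSup hcomp.bddAbove ⟨_, interior_subset hε, rfl⟩
  have h2 : sInf (f '' Ω) ≤ f z := csInf_le hcomp.bddBelow ⟨z, interior_subset hz, rfl⟩
  have h3 : f (z + ε • (-h.2, h.1)) = f z + ε := by
    simp only [hf, Prod.fst_add, Prod.snd_add, Prod.smul_mk, smul_eq_mul]
    linear_combination ε * hh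
  have h4 : 0 < ε := hε0
  change 0 < sSup (f '' Ω) - sInf (f '' Ω)
  linarith

/-- Theorem 4: with `wmax`, `wmin` the largest and smallest widths of `Ω`,
`‖u_{h₁}‖₁ ≤ 2 (wmax/wmin) ‖u_{h₂}‖₁` for every `u ∈ 𝒰_Ω` and all unit vectors
`h₁, h₂`. -/
theorem stmt_9 (Ω : Set (ℝ × ℝ)) (hΩc : IsCompact Ω) (hΩconv : Convex ℝ Ω)
    (hΩint : (interior Ω).Nonempty)
    (wmax wmin : ℝ)
    (hmax : IsGreatest {w : ℝ | ∃ h : ℝ × ℝ, h.1 ^ 2 + h.2 ^ 2 = 1 ∧ w = widthPar Ω h} wmax)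
    (hmin : IsLeast {w : ℝ | ∃ h : ℝ × ℝ, h.1 ^ 2 + h.2 ^ 2 = 1 ∧ w = widthPar Ω h} wmin)
    (u : ℝ × ℝ → ℝ) (hu : MemU Ω u)
    (h₁ h₂ : ℝ × ℝ) (hh₁ : h₁.1 ^ 2 + h₁.2 ^ 2 = 1) (hh₂ : h₂.1 ^ 2 + h₂.2 ^ 2 = 1) :
    L1N Ω (uh h₁ u) ≤ 2 * (wmax / wmin) * L1N Ω (uh h₂ u) := by
  obtain ⟨z₀, hz₀, hz₀max⟩ :=
    hΩc.exists_isMaxOn (hΩint.mono interior_subset) hu.1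
  have hM : 0 ≤ u z₀ := hu.2.1.nonneg_of_frontier hΩc hu.2.2.1 hz₀
  have hwmin : 0 < wmin := by
    obtain ⟨h, hh, rfl⟩ := hmin.1
    exact widthPar_pos hΩc hΩint hh
  have hw₁ : widthPar Ω h₁ ≤ wmax := hmax.2 ⟨h₁, hh₁, rfl⟩
  have hw₂ : wmin ≤ widthPar Ω h₂ := hmin.2 ⟨h₂, hh₂, rfl⟩
  have hwmax : 0 < wmax := (widthPar_pos hΩc hΩint hh₁).trans_le hw₁
  calc L1N Ω (uh h₁ u) ≤ 2 * u z₀ * widthPar Ω h₁ :=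
        (hu.L1N_bounds hΩc hΩconv hz₀ hz₀max hh₁).2
    _ ≤ 2 * u z₀ * wmax := by gcongr
    _ = 2 * (wmax / wmin) * (u z₀ * wmin) := by field_simp
    _ ≤ 2 * (wmax / wmin) * (u z₀ * widthPar Ω h₂) := by gcongr
    _ ≤ 2 * (wmax / wmin) * L1N Ω (uh h₂ u) := by
        gcongr
        exact (hu.L1N_bounds hΩc hΩconv hz₀ hz₀max hh₂).1
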